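/- arXiv:0704.2615 — 6 statements merged into one kernel-verified Lean document; each statement's English description precedes it below -/
import Mathlib

section
/- Let 𝒞 be a weakly filtering category (not necessarily small), Q a fixed object of 𝒞, and F : 𝒞 ⥤ Sets a (Type-valued) functor such that F(u) : F(Q) → F(O) is surjective for every morphism u : Q ⟶ O. Then the relation on F(Q) defined by: y ≈ y' iff there exist an object O and morphisms u, v : Q ⟶ O with F(u)(y) = F(v)(y'), is an equivalence relation. -/
/-!
Only transitivity needs an argument. If `y₁ ≈ y₂` is witnessed by `u, v : Q ⟶ O` and `y₂ ≈ y₃`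
by `u', v' : Q ⟶ O'`, (F1) maps `O` and `O'` to a common object, and (F̃2), applied to the two
resulting morphisms out of `Q` extending `v` and `u'`, completes `v` and `u'` to a commutative
square `v ≫ a = u' ≫ b`. Pushing both equalities forward along `a` and `b` identifies the image of
`y₁` under `u ≫ a` with the image of `y₃` under `v' ≫ b`.
-/

open CategoryTheory

universe w' w v u v' u'

section FilteringDefs

variable (C : Type u) [Category.{v} C]

/-- Axiom (F1): for every pair of objects `O`, `O'` there exist an object `O''` and
morphisms `O ⟶ O''`, `O' ⟶ O''`. -/
def SatF1 : Prop := ∀ O O' : C, ∃ O'' : C, Nonempty (O ⟶ O'') ∧ Nonempty (O' ⟶ O'')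

/-- Axiom (F2): for every pair of morphisms `u, v : O ⟶ O'` there exist an object `O''`
and a morphism `w : O' ⟶ O''` with `w ∘ u = w ∘ v`. -/
def SatF2 : Prop :=
  ∀ ⦃O O' : C⦄ (u v : O ⟶ O'), ∃ (O'' : C) (w : O' ⟶ O''), u ≫ w = v ≫ w

/-- Axiom (F̃2): for every pair of morphisms `u, v : O ⟶ O'` there exist an object `O''`
and morphisms `w, z : O' ⟶ O''` with `w ∘ u = z ∘ v`. -/
def SatF2w : Prop :=
  ∀ ⦃O O' : C⦄ (u v : O ⟶ O'), ∃ (O'' : C) (w z : O' ⟶ O''), u ≫ w = v ≫ z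

/-- A category is filtering if it satisfies (F1) and (F2). -/
def PaperFiltering : Prop := SatF1 C ∧ SatF2 C

/-- A category is weakly filtering if it satisfies (F1) and (F̃2). -/
def WeaklyFiltering : Prop := SatF1 C ∧ SatF2w C

end FilteringDefs

section CofinalDefs

variable {N : Type u'} [Category.{v'} N] {C : Type u} [Category.{v} C]

/-- Axiom (C1): for every object `O` of `C` there exist an object `n` of `N` and a
morphism `O ⟶ Θ(n)`. -/
def SatC1 (Θ : N ⥤ C) : Prop := ∀ O : C, ∃ n : N, Nonempty (O ⟶ Θ.obj n)

/-- Axiom (C2): for every `n`, every `O` and every `u : Θ(n) ⟶ O`, there exist `m`,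
`ν : n ⟶ m` and `v : O ⟶ Θ(m)` with `v ∘ u = Θ(ν)`. -/
def SatC2 (Θ : N ⥤ C) : Prop :=
  ∀ (n : N) (O : C) (u : Θ.obj n ⟶ O),
    ∃ (m : N) (ν : n ⟶ m) (v : O ⟶ Θ.obj m), u ≫ v = Θ.map ν

/-- Axiom (C̃2): for every `O`, every `n` and every pair `u, v : O ⟶ Θ(n)`, there exists
`μ : n ⟶ m` with `Θ(μ) ∘ u = Θ(μ) ∘ v`. -/
def SatC2t (Θ : N ⥤ C) : Prop :=
  ∀ (O : C) (n : N) (u v : O ⟶ Θ.obj n),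
    ∃ (m : N) (μ : n ⟶ m), u ≫ Θ.map μ = v ≫ Θ.map μ

/-- A functor is cofinal if it satisfies (C1) and (C2). -/
def PaperCofinal (Θ : N ⥤ C) : Prop := SatC1 Θ ∧ SatC2 Θ

/-- A functor is cofinal in the sense of Artin–Mazur if it satisfies (C1) and (C̃2). -/
def AMCofinal (Θ : N ⥤ C) : Prop := SatC1 Θ ∧ SatC2t Θ

end CofinalDefs

/-- Let `𝒞` be a weakly filtering category (not necessarily small), `Q` a fixed object
and `F : 𝒞 ⥤ Sets` a functor such that `F(u) : F(Q) → F(O)` is surjective for every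
`u : Q ⟶ O`.  Then the relation `y ≈ y'` iff there exist an object `O` and morphisms
`u, v : Q ⟶ O` with `F(u)(y) = F(v)(y')` is an equivalence relation on `F(Q)`. -/
theorem stmt4 {C : Type u} [Category.{v} C] (Q : C) (F : C ⥤ Type w)
    (hC : WeaklyFiltering C)
    (hsurj : ∀ (O : C) (u : Q ⟶ O), Function.Surjective (F.map u)) :
    Equivalence (fun y y' : F.obj Q =>
      ∃ (O : C) (u v : Q ⟶ O), F.map u y = F.map v y') := by
  refine ⟨fun y => ⟨Q, 𝟙 Q, 𝟙 Q, rfl⟩, fun ⟨O, u, v, h⟩ => ⟨O, v, u, h.symm⟩, ?_⟩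
  rintro y₁ y₂ y₃ ⟨O, u, v, h⟩ ⟨O', u', v', h'⟩
  obtain ⟨P, ⟨f⟩, ⟨g⟩⟩ := hC.1 O O'
  obtain ⟨R, w, z, hwz⟩ := hC.2 (v ≫ f) (u' ≫ g)
  refine ⟨R, (u ≫ f) ≫ w, (v' ≫ g) ≫ z, ?_⟩
  calc F.map ((u ≫ f) ≫ w) y₁ = F.map ((v ≫ f) ≫ w) y₂ := by simp [h]
    _ = F.map ((u' ≫ g) ≫ z) y₂ := by rw [hwz]
    _ = F.map ((v' ≫ g) ≫ z) y₃ := by simp [h']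
end

section
/- Let 𝒞 be a weakly filtering category, Q a fixed object, and F : 𝒞 ⥤ Sets a (Type-valued) functor such that F(u) is surjective for every morphism u : Q ⟶ O. Let L := F(Q)/≈, where y ≈ y' iff there exist an object O and morphisms u, v : Q ⟶ O with F(u)(y) = F(v)(y'). Then: (i) for every object O and every x ∈ F(O) there exist an object Ô, morphisms u : O ⟶ Ô and v : Q ⟶ Ô, and an element y ∈ F(Q) with F(u)(x) = F(v)(y); (ii) the class [y] ∈ L depends only on x and not on the choice of (Ô, u, v, y), so that setting f_O(x) := [y] defines a map f_O : F(O) → L; (iii) the system (f_O) is F-compatible, i.e. f_{O'} ∘ F(w) = f_O for every morphism w : O ⟶ O'. -/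
/-!
Call `F(u)(x) = F(v)(y)`, with `v` out of `Q`, a presentation of `x` by `y`. Presentations exist by
(F1) and surjectivity. Any two presentations of `x` become comparable after mapping to a common
target by (F1) and (F̃2), so the class of `y` is determined by `x`
(`approxRel_of_presentations`); compatibility holds because a presentation of `F(w)(x)` is also
one of `x`.
-/

open CategoryTheory

universe w' w v u v' u'

/-- The relation `≈` on `F(Q)`: `y ≈ y'` iff there exist an object `O` and morphisms
`u, v : Q ⟶ O` with `F(u)(y) = F(v)(y')`. -/
def approxRel {C : Type u} [Category.{v} C] (Q : C) (F : C ⥤ Type w) :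
    F.obj Q → F.obj Q → Prop := fun y y' =>
  ∃ (O : C) (u v : Q ⟶ O), F.map u y = F.map v y'

/-- Two presentations `F(u₁)(x) = F(v₁)(y₁)` and `F(u₂)(x) = F(v₂)(y₂)` of the same element `x`
have equivalent `y₁`, `y₂`: (F1) brings both targets to a common object, and (F̃2) then completes
the two resulting morphisms out of `O` to a commutative square. -/
theorem approxRel_of_presentations {C : Type u} [Category.{v} C] {Q : C} {F : C ⥤ Type w}
    (hC : WeaklyFiltering C) {O O₁ O₂ : C} {x : F.obj O} {u₁ : O ⟶ O₁} {v₁ : Q ⟶ O₁}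
    {u₂ : O ⟶ O₂} {v₂ : Q ⟶ O₂} {y₁ y₂ : F.obj Q}
    (h₁ : F.map u₁ x = F.map v₁ y₁) (h₂ : F.map u₂ x = F.map v₂ y₂) :
    approxRel Q F y₁ y₂ := by
  obtain ⟨P, ⟨a⟩, ⟨b⟩⟩ := hC.1 O₁ O₂
  obtain ⟨R, w, z, hwz⟩ := hC.2 (u₁ ≫ a) (u₂ ≫ b)
  refine ⟨R, v₁ ≫ a ≫ w, v₂ ≫ b ≫ z, ?_⟩
  have h : F.map (u₁ ≫ a ≫ w) x = F.map (u₂ ≫ b ≫ z) x := by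
    simp only [← Category.assoc, hwz]
  rw [Functor.map_comp_apply F u₁, Functor.map_comp_apply F u₂, h₁, h₂] at h
  rw [Functor.map_comp_apply F v₁, Functor.map_comp_apply F v₂, h]

/-- Let `𝒞` be a weakly filtering category, `Q` a fixed object and `F : 𝒞 ⥤ Sets` a
functor such that `F(u)` is surjective for every `u : Q ⟶ O`.  Let `L := F(Q)/≈`.  Then:
(i) for every object `O` and `x ∈ F(O)` there exist `Ohat`, `u : O ⟶ Ohat`, `v : Q ⟶ Ohat` and
`y ∈ F(Q)` with `F(u)(x) = F(v)(y)`; (ii) the class `[y] ∈ L` depends only on `x`, so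
`f_O(x) := [y]` is a well-defined map `f_O : F(O) → L`; (iii) the system `(f_O)` is
`F`-compatible: `f_{O'} ∘ F(w) = f_O` for every `w : O ⟶ O'`. -/
theorem stmt5 {C : Type u} [Category.{v} C] (Q : C) (F : C ⥤ Type w)
    (hC : WeaklyFiltering C)
    (hsurj : ∀ (O : C) (u : Q ⟶ O), Function.Surjective (F.map u)) :
    (∀ (O : C) (x : F.obj O),
        ∃ (Ohat : C) (u : O ⟶ Ohat) (v : Q ⟶ Ohat) (y : F.obj Q), F.map u x = F.map v y) ∧
    ∃ f : ∀ O : C, F.obj O → Quot (approxRel Q F),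
      (∀ (O : C) (x : F.obj O) (Ohat : C) (u : O ⟶ Ohat) (v : Q ⟶ Ohat) (y : F.obj Q),
          F.map u x = F.map v y → f O x = Quot.mk (approxRel Q F) y) ∧
      (∀ (O O' : C) (w : O ⟶ O') (x : F.obj O), f O' (F.map w x) = f O x) := by
  have ex : ∀ (O : C) (x : F.obj O),
      ∃ (Ohat : C) (u : O ⟶ Ohat) (v : Q ⟶ Ohat) (y : F.obj Q), F.map u x = F.map v y := by
    intro O x
    obtain ⟨P, ⟨u⟩, ⟨v⟩⟩ := hC.1 O Q
    obtain ⟨y, hy⟩ := hsurj P v (F.map u x)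
    exact ⟨P, u, v, y, hy.symm⟩
  refine ⟨ex, ?_⟩
  choose T p q g hg using ex
  refine ⟨fun O x => Quot.mk _ (g O x), ?_, ?_⟩
  · intro O x Ohat u v y h
    exact Quot.sound (approxRel_of_presentations hC (hg O x) h)
  · intro O O' w x
    -- A presentation of `F(w)(x)` along `p` is one of `x` along `w ≫ p`.
    have h : F.map (w ≫ p O' (F.map w x)) x =
        F.map (q O' (F.map w x)) (g O' (F.map w x)) := by
      rw [Functor.map_comp_apply]
      exact hg O' (F.map w x)
    exact Quot.sound (approxRel_of_presentations hC h (hg O x))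
end

section
/- Let 𝒞 be a weakly filtering category, Q a fixed object, and F : 𝒞 ⥤ Sets a (Type-valued) functor such that F(u) is surjective for every morphism u : Q ⟶ O. Let L := F(Q)/≈ (where y ≈ y' iff there exist an object O and morphisms u, v : Q ⟶ O with F(u)(y) = F(v)(y')), and let f_O : F(O) → L be the maps determined by f_O(x) = [y] whenever F(u)(x) = F(v)(y) for some morphisms u : O ⟶ Ô, v : Q ⟶ Ô. Then (L, (f_O)) satisfies the universal property of the inductive limit of F: for every set Λ and every F-compatible family g_O : F(O) → Λ (i.e. g_{O'} ∘ F(w) = g_O for all morphisms w : O ⟶ O'), there is a unique map g : L → Λ with g ∘ f_O = g_O for all objects O. In particular the inductive limit of F exists and can be identified with L. -/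
/-!
The map `G` is the factorization of `g_Q` through the quotient `L` of `F(Q)`. It recovers every
`g_O`, because an element of `F(O)` and some element of `F(Q)` have the same image in a common
`F(Ohat)`: by (F1) there is such an `Ohat`, and `F(Q)` surjects onto `F(Ohat)`. It is unique
because `f_Q` is the surjective quotient map.
-/

open CategoryTheory

universe w' w v u v' u'

/-- Let `𝒞` be a weakly filtering category, `Q` a fixed object, `F : 𝒞 ⥤ Sets` a functor
with `F(u)` surjective for every `u : Q ⟶ O`, `L := F(Q)/≈`, and let `f_O : F(O) → L` be
the maps determined by `f_O(x) = [y]` whenever `F(u)(x) = F(v)(y)` for some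
`u : O ⟶ Ohat`, `v : Q ⟶ Ohat`.  Then `(L, (f_O))` satisfies the universal property of the
inductive limit of `F`: for every set `Λ` and every `F`-compatible family `g_O : F(O) → Λ`
there is a unique `g : L → Λ` with `g ∘ f_O = g_O` for all `O`. -/
theorem stmt6 {C : Type u} [Category.{v} C] (Q : C) (F : C ⥤ Type w)
    (hC : WeaklyFiltering C)
    (hsurj : ∀ (O : C) (u : Q ⟶ O), Function.Surjective (F.map u))
    (f : ∀ O : C, F.obj O → Quot (approxRel Q F))
    (hf : ∀ (O : C) (x : F.obj O) (Ohat : C) (u : O ⟶ Ohat) (v : Q ⟶ Ohat) (y : F.obj Q),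
        F.map u x = F.map v y → f O x = Quot.mk (approxRel Q F) y) :
    ∀ (Λ : Type w') (g : ∀ O : C, F.obj O → Λ),
      (∀ (O O' : C) (w : O ⟶ O') (x : F.obj O), g O' (F.map w x) = g O x) →
      ∃! G : Quot (approxRel Q F) → Λ, ∀ (O : C) (x : F.obj O), G (f O x) = g O x := by
  intro Λ g hg
  -- Compatibility gives `g_Q(y) = g_O(F(u)(y)) = g_O(F(v)(y')) = g_Q(y')` whenever `y ≈ y'`,
  -- so `g_Q` descends to `L`.
  refine ⟨Quot.lift (g Q) ?_, ?_, ?_⟩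
  · rintro y y' ⟨O, u, v, h⟩
    rw [← hg Q O u y, h, hg]
  · intro O x
    -- By (F1) and surjectivity, every `x` is identified with an element `y` of `F(Q)`.
    obtain ⟨Ohat, ⟨u⟩, ⟨v⟩⟩ := hC.1 O Q
    obtain ⟨y, hy⟩ := hsurj Ohat v (F.map u x)
    rw [hf O x Ohat u v y hy.symm]
    change g Q y = g O x
    rw [← hg Q Ohat v y, hy, hg]
  · intro G hG
    funext q
    induction q using Quot.ind with
    | mk y =>
      -- Taking `u = v = 𝟙 Q` shows that `f_Q` is the quotient map, so `g_Q` determines `G`.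
      rw [← hf Q y Q (𝟙 Q) (𝟙 Q) y rfl, hG, hf Q y Q (𝟙 Q) (𝟙 Q) y rfl]
end

section
/- Let 𝒞 be a filtering category, 𝒩 any category, and Θ : 𝒩 ⥤ 𝒞 a cofinal functor. Then every (Type-valued) functor G : 𝒞 ⥤ Sets satisfies the axiom ΘSA: for every object n of 𝒩, every element x ∈ G(Θ(n)) and every automorphism a of Θ(n), there exists a morphism ν : n ⟶ m in 𝒩 such that G(Θ(ν))(G(a)(x)) = G(Θ(ν))(x). -/
open CategoryTheory

universe w' w v u v' u'

/-- The trivial stable actions axiom (TSA): for every object `O`, every `x ∈ G(O)` and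
every automorphism `a` of `O` there exists a morphism `u : O ⟶ O'` such that
`G(u)(G(a)(x)) = G(u)(x)`. -/
def SatTSA {C : Type u} [Category.{v} C] (G : C ⥤ Type w) : Prop :=
  ∀ (O : C) (x : G.obj O) (a : Aut O),
    ∃ (O' : C) (u : O ⟶ O'), G.map u (G.map a.hom x) = G.map u x

/-- The axiom (ΘSA): for every object `n` of `𝒩`, every `x ∈ G(Θ(n))` and every
automorphism `a` of `Θ(n)` there exists `ν : n ⟶ m` in `𝒩` such that
`G(Θ(ν))(G(a)(x)) = G(Θ(ν))(x)`. -/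
def SatThetaSA {N : Type u'} [Category.{v'} N] {C : Type u} [Category.{v} C]
    (Θ : N ⥤ C) (G : C ⥤ Type w) : Prop :=
  ∀ (n : N) (x : G.obj (Θ.obj n)) (a : Aut (Θ.obj n)),
    ∃ (m : N) (ν : n ⟶ m), G.map (Θ.map ν) (G.map a.hom x) = G.map (Θ.map ν) x

/-- Let `𝒞` be a filtering category, `𝒩` any category and `Θ : 𝒩 ⥤ 𝒞` a cofinal
functor.  Then every functor `G : 𝒞 ⥤ Sets` satisfies the axiom (ΘSA). -/
theorem stmt13 {N : Type u'} [Category.{v'} N] {C : Type u} [Category.{v} C]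
    (hC : PaperFiltering C) (Θ : N ⥤ C) (hcof : PaperCofinal Θ) (G : C ⥤ Type w) :
    SatThetaSA Θ G := by
  intro n x a
  -- Equalize `a` and the identity by some `w`, then absorb `w` into the image of `Θ` by (C2).
  obtain ⟨O, w, hw⟩ := hC.2 a.hom (𝟙 (Θ.obj n))
  obtain ⟨m, ν, v, hv⟩ := hcof.2 n O w
  have h : a.hom ≫ Θ.map ν = Θ.map ν := by
    rw [← hv, ← Category.assoc, hw, Category.id_comp]
  refine ⟨m, ν, ?_⟩
  conv_rhs => rw [← h, G.map_comp]
  rfl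
end

section
/- Let (𝒰, A) be a category with automorphism push-forward, 𝒩 a category, and Θ : 𝒩 ⥤ 𝒰 a cofinal functor. If a (Type-valued) functor G : 𝒰 ⥤ Sets satisfies ΘSA (for every object n of 𝒩, every x ∈ G(Θ(n)) and every automorphism a of Θ(n) there exists ν : n ⟶ m in 𝒩 with G(Θ(ν))(G(a)(x)) = G(Θ(ν))(x)), then G satisfies TSA: for every object O of 𝒰, every x ∈ G(O) and every automorphism a of O, there exists a morphism u : O ⟶ O' such that G(u)(G(a)(x)) = G(u)(x). -/
open CategoryTheory

universe w' w v u v' u'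

/-- A category with automorphism push-forward: a category `𝒰` satisfying (F1), equipped
with, for every morphism `u : O ⟶ O'`, a group homomorphism `A(u) : Aut(O) → Aut(O')`,
functorial in `u`, satisfying (S2): `A(u)(a) ∘ u = u ∘ a`, and (S3): for every pair of
morphisms `u, v : O ⟶ O'` there exist `O''`, `w : O' ⟶ O''` and `a ∈ Aut(O'')` with
`a ∘ w ∘ u = w ∘ v`. -/
structure AutoPushforward (U : Type u) [Category.{v} U] : Type (max u v) where
  f1 : SatF1 U
  A : ∀ {O O' : U}, (O ⟶ O') → (Aut O →* Aut O')
  A_id : ∀ (O : U) (a : Aut O), A (𝟙 O) a = a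
  A_comp : ∀ {O O' O'' : U} (u : O ⟶ O') (v : O' ⟶ O'') (a : Aut O),
    A (u ≫ v) a = A v (A u a)
  s2 : ∀ {O O' : U} (u : O ⟶ O') (a : Aut O), u ≫ (A u a).hom = a.hom ≫ u
  s3 : ∀ {O O' : U} (u v : O ⟶ O'),
    ∃ (O'' : U) (w : O' ⟶ O'') (a : Aut O''), u ≫ w ≫ a.hom = v ≫ w

/-- Let `(𝒰, A)` be a category with automorphism push-forward, `𝒩` a category and
`Θ : 𝒩 ⥤ 𝒰` a cofinal functor.  If a functor `G : 𝒰 ⥤ Sets` satisfies (ΘSA), then `G`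
satisfies (TSA). -/
theorem stmt14 {U : Type u} [Category.{v} U] (AP : AutoPushforward U)
    {N : Type u'} [Category.{v'} N] (Θ : N ⥤ U) (hcof : PaperCofinal Θ)
    (G : U ⥤ Type w) (hSA : SatThetaSA Θ G) :
    SatTSA G := by
  intro O x a
  obtain ⟨n, ⟨u⟩⟩ := hcof.1 O
  obtain ⟨m, ν, h⟩ := hSA n (G.map u x) (AP.A u a)
  refine ⟨Θ.obj m, u ≫ Θ.map ν, ?_⟩
  -- By (S2), `a` acting before `u` is its push-forward `A(u)(a)` acting after `u`.
  have key : G.map u (G.map a.hom x) = G.map (AP.A u a).hom (G.map u x) := by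
    rw [← Functor.map_comp_apply, ← Functor.map_comp_apply, AP.s2]
  rw [Functor.map_comp_apply, Functor.map_comp_apply, key, h]
end

section
/- Let (𝒰, A) be a category with automorphism push-forward, 𝒩 a small filtering category, Θ : 𝒩 ⥤ 𝒰 a cofinal functor, and G : 𝒰 ⥤ Sets a (Type-valued) functor satisfying ΘSA. Let L_Θ := colim_{n ∈ 𝒩} G(Θ(n)) with canonical maps c_n : G(Θ(n)) → L_Θ. Then: (i) for every object O of 𝒰 and every x ∈ G(O), the element c_n(G(v)(x)) ∈ L_Θ is independent of the choice of an object n of 𝒩 and a morphism v : O ⟶ Θ(n) (such a morphism exists by (C1)), so that setting f_O(x) := c_n(G(v)(x)) gives a well-defined map f_O : G(O) → L_Θ; (ii) the system (f_O) is G-compatible: f_{O'} ∘ G(u) = f_O for every morphism u : O ⟶ O'. -/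
/-!
Two morphisms `v, v'` from `O` to objects in the image of `Θ` may be assumed, by (F1) in `𝒩`, to
have the same target `Θ(k)`. By (S3) they agree after some `w : Θ(k) ⟶ O''` up to an automorphism
of `O''`, and (C2) followed by the push-forward of that automorphism replaces `w` by a transition
morphism `Θ(ν)` and `O''` by `Θ(l)` (`exists_map_comp_aut_eq`). The axiom (ΘSA) then says that
automorphisms of `Θ(l)` act trivially in the colimit (`colimit_ι_map_aut`), which proves (i);
claim (ii) is (i) applied to `u ≫ v` and `v'`.
-/

open CategoryTheory

universe w' w v u v' u'

open CategoryTheory.Limits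

/-- Parallel morphisms into `Θ(k)` agree up to an automorphism after a transition morphism of `Θ`:
this is (S3) with its auxiliary object moved into the image of `Θ`. -/
lemma exists_map_comp_aut_eq {U : Type u'} [Category.{v'} U] (AP : AutoPushforward U)
    {N : Type u} [Category.{v} N] {Θ : N ⥤ U} (hC2 : SatC2 Θ)
    {O : U} {k : N} (v v' : O ⟶ Θ.obj k) :
    ∃ (l : N) (ν : k ⟶ l) (a : Aut (Θ.obj l)),
      v ≫ Θ.map ν ≫ a.hom = v' ≫ Θ.map ν := by
  obtain ⟨O'', w, a, h⟩ := AP.s3 v v'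
  obtain ⟨l, ν, z, hz⟩ := hC2 k O'' w
  refine ⟨l, ν, AP.A z a, ?_⟩
  rw [← hz, Category.assoc, AP.s2 z a, ← Category.assoc v', ← h]
  simp only [Category.assoc]

/-- Under (ΘSA), automorphisms of `Θ(n)` act trivially on the image of `G(Θ(n))` in the colimit. -/
lemma colimit_ι_map_aut {U : Type u'} [Category.{v'} U] {N : Type u} [SmallCategory N]
    {Θ : N ⥤ U} {G : U ⥤ Type u} (hSA : SatThetaSA Θ G) {n : N} (a : Aut (Θ.obj n))
    (x : G.obj (Θ.obj n)) :
    colimit.ι (Θ ⋙ G) n (G.map a.hom x) = colimit.ι (Θ ⋙ G) n x := by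
  obtain ⟨m, ν, h⟩ := hSA n x a
  have hν (y : G.obj (Θ.obj n)) :
      colimit.ι (Θ ⋙ G) m (G.map (Θ.map ν) y) = colimit.ι (Θ ⋙ G) n y :=
    ConcreteCategory.congr_hom (colimit.w (Θ ⋙ G) ν) y
  rw [← hν, h, hν]

/-- The class of `G(v)(x)` in the colimit is unchanged when `v` is composed with a transition
morphism of `Θ`. -/
lemma colimit_ι_map_comp {U : Type u'} [Category.{v'} U] {N : Type u} [SmallCategory N]
    (Θ : N ⥤ U) (G : U ⥤ Type u) {O : U} (x : G.obj O) {n m : N} (v : O ⟶ Θ.obj n)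
    (ν : n ⟶ m) :
    colimit.ι (Θ ⋙ G) m (G.map (v ≫ Θ.map ν) x) = colimit.ι (Θ ⋙ G) n (G.map v x) := by
  rw [Functor.map_comp_apply]
  exact ConcreteCategory.congr_hom (colimit.w (Θ ⋙ G) ν) (G.map v x)

/-- Let `(𝒰, A)` be a category with automorphism push-forward, `𝒩` a small filtering
category, `Θ : 𝒩 ⥤ 𝒰` a cofinal functor and `G : 𝒰 ⥤ Sets` a functor satisfying (ΘSA).
Let `L_Θ := colim_{n ∈ 𝒩} G(Θ(n))` with canonical maps `c_n`.  Then: (i) for every object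
`O` of `𝒰` and `x ∈ G(O)`, the element `c_n(G(v)(x)) ∈ L_Θ` is independent of the choice
of `n` and `v : O ⟶ Θ(n)` (so `f_O(x) := c_n(G(v)(x))` is well defined); (ii) the system
`(f_O)` is `G`-compatible: `f_{O'} ∘ G(u) = f_O` for every `u : O ⟶ O'`. -/
theorem stmt15 {U : Type u'} [Category.{v'} U] (AP : AutoPushforward U)
    {N : Type u} [SmallCategory N] (hN : PaperFiltering N)
    (Θ : N ⥤ U) (hcof : PaperCofinal Θ)
    (G : U ⥤ Type u) (hSA : SatThetaSA Θ G) :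
    (∀ (O : U) (x : G.obj O) (n m : N) (v : O ⟶ Θ.obj n) (v' : O ⟶ Θ.obj m),
        colimit.ι (Θ ⋙ G) n (G.map v x) = colimit.ι (Θ ⋙ G) m (G.map v' x)) ∧
    (∀ (O O' : U) (u : O ⟶ O') (x : G.obj O) (n : N) (v : O' ⟶ Θ.obj n)
        (m : N) (v' : O ⟶ Θ.obj m),
        colimit.ι (Θ ⋙ G) n (G.map v (G.map u x)) =
          colimit.ι (Θ ⋙ G) m (G.map v' x)) := by
  have key : ∀ (O : U) (x : G.obj O) (n m : N) (v : O ⟶ Θ.obj n) (v' : O ⟶ Θ.obj m),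
      colimit.ι (Θ ⋙ G) n (G.map v x) = colimit.ι (Θ ⋙ G) m (G.map v' x) := by
    intro O x n m v v'
    obtain ⟨k, ⟨α⟩, ⟨β⟩⟩ := hN.1 n m
    obtain ⟨l, ν, a, h⟩ := exists_map_comp_aut_eq AP hcof.2 (v ≫ Θ.map α) (v' ≫ Θ.map β)
    rw [← colimit_ι_map_comp Θ G x v α, ← colimit_ι_map_comp Θ G x v' β,
      ← colimit_ι_map_comp Θ G x (v ≫ Θ.map α) ν, ← colimit_ι_map_comp Θ G x (v' ≫ Θ.map β) ν,
      ← h, ← Category.assoc (v ≫ Θ.map α), Functor.map_comp_apply G _ a.hom,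
      colimit_ι_map_aut hSA]
  refine ⟨key, fun O O' u x n v m v' => ?_⟩
  rw [← Functor.map_comp_apply]
  exact key O x n m (u ≫ v) v'
end
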